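/- Let k, ℓ be integers with 1 ≤ ℓ ≤ k and let n ∈ ℕ. Then, as an identity of polynomials in q (with the conventions n_0 := 0 and n_k := n), Σ_{n ≥ n_{k−1} ≥ … ≥ n_1 ≥ 0} ∏_{ν=1}^{k} q^{n_{ν−1}² + n_{ν−1}} [ min(ν,ℓ) − 1 + n_ν − n_{ν−1} + 2Σ_{μ=1}^{ν−1} n_μ choose n_ν − n_{ν−1} ]_q = H_n(k,ℓ;0;q). -/

import Mathlib

noncomputable section

/-- The Gaussian binomial coefficient `[n choose r]_q` as a polynomial in `q` with integer
coefficients, defined by the q-Pascal recursion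
`[n+1 choose r+1] = [n choose r+1] + q^{n-r} [n choose r]`, `[n choose 0] = 1`,
`[0 choose r+1] = 0`. -/
def qbinom : ℕ → ℕ → Polynomial ℤ
  | _, 0 => 1
  | 0, _ + 1 => 0
  | n + 1, r + 1 => qbinom n (r + 1) + Polynomial.X ^ (n - r) * qbinom n r

/-- The Gaussian polynomial `[m choose r]_q` with integer arguments, evaluated at `q ∈ ℂ`:
it is `[m choose r]_q` if `0 ≤ r ≤ m`, and `0` otherwise. -/
def gaussP (q : ℂ) (m r : ℤ) : ℂ :=
  if 0 ≤ r ∧ r ≤ m then ((qbinom m.toNat r.toNat).map (Int.castRingHom ℂ)).eval q else 0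

/-- Accessor for a chain `0 = n_0 ≤ n_1 ≤ ⋯ ≤ n_{k-1} ≤ n_k = n` encoded by
`f : Fin (k-1) → Fin (n+1)` (the values `n_1, …, n_{k-1}`). -/
def chainN (k n : ℕ) (f : Fin (k - 1) → Fin (n + 1)) (j : ℕ) : ℕ :=
  if h : 1 ≤ j ∧ j ≤ k - 1 then (f ⟨j - 1, by omega⟩ : ℕ)
  else if j = 0 then 0 else n

/-- The polynomial `H_n(k,ℓ;b;q)`: the sum over chains `n = n_k ≥ n_{k-1} ≥ ⋯ ≥ n_1 ≥ 0` of
`∏_{j=1}^{k-1} q^{n_j² + (1-b) n_j} [n_{j+1} - n_j - bj + Σ_{r=1}^j (2 n_r + χ_{ℓ>r}) choose n_{j+1} - n_j]_q`. -/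
def HpolyP (k ℓ b : ℕ) (q : ℂ) (n : ℕ) : ℂ :=
  ∑ f ∈ Finset.univ.filter
      (fun f : Fin (k - 1) → Fin (n + 1) => ∀ i j, i ≤ j → f i ≤ f j),
    ∏ j ∈ Finset.Icc 1 (k - 1),
      q ^ (chainN k n f j ^ 2 + (1 - b) * chainN k n f j) *
        gaussP q
          ((chainN k n f (j + 1) : ℤ) - (chainN k n f j : ℤ) - (b : ℤ) * (j : ℤ)
            + ∑ r ∈ Finset.Icc 1 j, (2 * (chainN k n f r : ℤ) + if r < ℓ then 1 else 0))
          ((chainN k n f (j + 1) : ℤ) - (chainN k n f j : ℤ))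

/-!
The two sides agree chain by chain. Since `n_0 = 0`, the factor `ν = 1` on the left is
`[n_1 choose n_1]_q = 1`. For `ν = j + 1` the power of `q` is already that of the factor `j` of
`H_n`, and the upper indices of the Gaussian polynomials agree because `χ_{ℓ>r} = 1` for exactly
`min(j + 1, ℓ) - 1` of the indices `1 ≤ r ≤ j`.
-/

theorem qbinom_eq_zero_of_lt {n r : ℕ} (h : n < r) : qbinom n r = 0 := by
  induction n generalizing r with
  | zero =>
    obtain ⟨s, rfl⟩ := Nat.exists_eq_add_one_of_ne_zero h.ne'
    rfl
  | succ n ih =>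
    obtain ⟨s, rfl⟩ := Nat.exists_eq_add_one_of_ne_zero (Nat.ne_zero_of_lt h)
    rw [qbinom, ih (by omega), ih (by omega), mul_zero, add_zero]

theorem qbinom_self (n : ℕ) : qbinom n n = 1 := by
  induction n with
  | zero => rfl
  | succ n ih =>
    rw [qbinom, qbinom_eq_zero_of_lt n.lt_succ_self, ih, Nat.sub_self, pow_zero, mul_one, zero_add]

theorem gaussP_self (q : ℂ) {m : ℤ} (hm : 0 ≤ m) : gaussP q m m = 1 := by
  simp [gaussP, hm, qbinom_self]

theorem chainN_zero (k n : ℕ) (f : Fin (k - 1) → Fin (n + 1)) : chainN k n f 0 = 0 := by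
  simp [chainN]

theorem sum_Icc_one_ite_lt {R : Type*} [NonAssocSemiring R] (ℓ j : ℕ) :
    ∑ r ∈ Finset.Icc 1 j, (if r < ℓ then (1 : R) else 0) = (min (j + 1) ℓ - 1 : ℕ) := by
  have filter_lt : {r ∈ Finset.Icc 1 j | r < ℓ} = Finset.Ico 1 (min (j + 1) ℓ) := by
    ext r
    simp only [Finset.mem_filter, Finset.mem_Icc, Finset.mem_Ico]
    omega
  rw [Finset.sum_boole, filter_lt, Nat.card_Ico]

theorem prod_Icc_add_one_eq_mul_prod_Icc {M : Type*} [CommMonoid M] (F : ℕ → M) {a b : ℕ}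
    (h : a ≤ b + 1) :
    ∏ i ∈ Finset.Icc a (b + 1), F i = F a * ∏ i ∈ Finset.Icc a b, F (i + 1) := by
  rw [← Finset.mul_prod_Ioc_eq_prod_Icc h, ← Finset.Icc_add_one_left_eq_Ioc,
    ← Finset.map_add_right_Icc, Finset.prod_map]
  rfl

/-- The factor with index `ν` of the summand of the `k`-fold sum, for the chain
`n_0, n_1, …` given by `c`. It makes sense for `ν ≥ 1` only, since `ν - 1` is truncated. -/
def kFoldFactor (q : ℂ) (ℓ : ℕ) (c : ℕ → ℕ) (ν : ℕ) : ℂ :=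
  q ^ (c (ν - 1) ^ 2 + c (ν - 1)) *
    gaussP q
      ((min ν ℓ : ℤ) - 1 + (c ν : ℤ) - (c (ν - 1) : ℤ)
        + 2 * ∑ μ ∈ Finset.Icc 1 (ν - 1), (c μ : ℤ))
      ((c ν : ℤ) - (c (ν - 1) : ℤ))

theorem kFoldFactor_one (q : ℂ) {ℓ : ℕ} (hℓ : 1 ≤ ℓ) {c : ℕ → ℕ} (hc : c 0 = 0) :
    kFoldFactor q ℓ c 1 = 1 := by
  have min_eq_one : min 1 (ℓ : ℤ) = 1 := min_eq_left (mod_cast hℓ)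
  simp [kFoldFactor, hc, min_eq_one, gaussP_self]

theorem kFoldFactor_add_one (q : ℂ) {ℓ : ℕ} (hℓ : 1 ≤ ℓ) (c : ℕ → ℕ) (j : ℕ) :
    kFoldFactor q ℓ c (j + 1) =
      q ^ (c j ^ 2 + c j) *
        gaussP q
          ((c (j + 1) : ℤ) - (c j : ℤ)
            + ∑ r ∈ Finset.Icc 1 j, (2 * (c r : ℤ) + if r < ℓ then 1 else 0))
          ((c (j + 1) : ℤ) - (c j : ℤ)) := by
  have count_lt : ((min (j + 1) ℓ - 1 : ℕ) : ℤ) = (min (j + 1 : ℕ) ℓ : ℤ) - 1 := by omega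
  rw [kFoldFactor, Nat.add_sub_cancel, Finset.sum_add_distrib, ← Finset.mul_sum,
    sum_Icc_one_ite_lt, count_lt]
  congr 2
  ring

theorem statement12_general (k ℓ : ℕ) (hk : 1 ≤ k) (hℓ : 1 ≤ ℓ) (n : ℕ) :
    ∀ q : ℂ,
      ∑ f ∈ Finset.univ.filter
          (fun f : Fin (k - 1) → Fin (n + 1) => ∀ i j, i ≤ j → f i ≤ f j),
        ∏ ν ∈ Finset.Icc 1 k,
          q ^ (chainN k n f (ν - 1) ^ 2 + chainN k n f (ν - 1)) *
            gaussP q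
              ((min ν ℓ : ℤ) - 1 + (chainN k n f ν : ℤ) - (chainN k n f (ν - 1) : ℤ)
                + 2 * ∑ μ ∈ Finset.Icc 1 (ν - 1), (chainN k n f μ : ℤ))
              ((chainN k n f ν : ℤ) - (chainN k n f (ν - 1) : ℤ))
      = HpolyP k ℓ 0 q n := by
  intro q
  obtain ⟨m, rfl⟩ := Nat.exists_eq_add_of_le' hk
  refine Finset.sum_congr rfl fun f _ ↦ ?_
  change ∏ ν ∈ Finset.Icc 1 (m + 1), kFoldFactor q ℓ (chainN (m + 1) n f) ν = _
  rw [prod_Icc_add_one_eq_mul_prod_Icc _ (by omega), kFoldFactor_one q hℓ (chainN_zero _ n f),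
    one_mul]
  simp only [kFoldFactor_add_one q hℓ, Nat.add_sub_cancel, Nat.sub_zero, one_mul, Nat.cast_zero,
    zero_mul, sub_zero]

/-- The final identity in the proof of Lemma 3.1: the `k`-fold sum expression for `β_n(1)`
equals `H_n(k,ℓ;0;q)`, as an identity of polynomials in `q` (stated for every `q ∈ ℂ`).
Here `n_0 := 0` and `n_k := n`. -/
theorem statement12 (k ℓ : ℕ) (hℓ : 1 ≤ ℓ) (hk : ℓ ≤ k) (n : ℕ) :
    ∀ q : ℂ,
      ∑ f ∈ Finset.univ.filter
          (fun f : Fin (k - 1) → Fin (n + 1) => ∀ i j, i ≤ j → f i ≤ f j),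
        ∏ ν ∈ Finset.Icc 1 k,
          q ^ (chainN k n f (ν - 1) ^ 2 + chainN k n f (ν - 1)) *
            gaussP q
              ((min ν ℓ : ℤ) - 1 + (chainN k n f ν : ℤ) - (chainN k n f (ν - 1) : ℤ)
                + 2 * ∑ μ ∈ Finset.Icc 1 (ν - 1), (chainN k n f μ : ℤ))
              ((chainN k n f ν : ℤ) - (chainN k n f (ν - 1) : ℤ))
      = HpolyP k ℓ 0 q n :=
  statement12_general k ℓ (hℓ.trans hk) hℓ n
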